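/- Let Ω ⊆ ℝ^{d+1} be an L₀-Lipschitz graph domain and let g be a C¹ map defined on a neighborhood of Ω which is L-bi-Lipschitz from Ω onto its image. There exist constants L₁ > 0 and δ₀ > 0, depending only on L₀, L and d, such that if 0 < δ < δ₀, Dg(w) is invertible for all w ∈ Ω, and ‖Dg(z)∘Dg(w)^{-1} − I‖ ≤ δ for all z, w ∈ Ω, then g(Ω) is an L₁-Lipschitz graph domain. -/

import Mathlib

open Metric MeasureTheory Set
open scoped ENNReal NNReal

noncomputable section

/-- `Ω ⊆ ℝ^{d+1}` is an `M`-Lipschitz graph domain: an open connected set such that, after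
applying a composition `x ↦ c • R x + b` of a translation, dilation and rotation, its boundary
is the radial graph of an `M`-Lipschitz function `r : S^d → [1/(1+M), 1]`. -/
def IsLipschitzGraphDomain (d : ℕ) (M : ℝ) (Ω : Set (EuclideanSpace ℝ (Fin (d + 1)))) : Prop :=
  IsOpen Ω ∧ IsConnected Ω ∧
  ∃ (c : ℝ) (R : EuclideanSpace ℝ (Fin (d + 1)) ≃ₗᵢ[ℝ] EuclideanSpace ℝ (Fin (d + 1)))
    (b : EuclideanSpace ℝ (Fin (d + 1))) (rf : EuclideanSpace ℝ (Fin (d + 1)) → ℝ),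
    0 < c ∧
    frontier ((fun x => c • R x + b) '' Ω) =
      {y | ∃ θ ∈ Metric.sphere (0 : EuclideanSpace ℝ (Fin (d + 1))) 1, y = rf θ • θ} ∧
    (∀ θ ∈ Metric.sphere (0 : EuclideanSpace ℝ (Fin (d + 1))) 1,
      ∀ ψ ∈ Metric.sphere (0 : EuclideanSpace ℝ (Fin (d + 1))) 1,
        |rf θ - rf ψ| ≤ M * dist θ ψ) ∧
    (∀ θ ∈ Metric.sphere (0 : EuclideanSpace ℝ (Fin (d + 1))) 1,
      1 / (1 + M) ≤ rf θ ∧ rf θ ≤ 1)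


lemma gauge_exists {E : Type*} [NormedAddCommGroup E] [NormedSpace ℝ E] (M : ℝ) (hM : 0 ≤ M)
    (rf : E → ℝ)
    (h1 : ∀ θ ∈ Metric.sphere (0 : E) 1, ∀ ψ ∈ Metric.sphere (0 : E) 1,
        |rf θ - rf ψ| ≤ M * dist θ ψ)
    (h2 : ∀ θ ∈ Metric.sphere (0 : E) 1, 1 / (1 + M) ≤ rf θ ∧ rf θ ≤ 1) :
    ∃ N : E → ℝ, (∀ x y, |N x - N y| ≤ ((1 + M) + 2 * M * (1 + M) ^ 2) * ‖x - y‖) ∧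
      (∀ (t : ℝ) x, 0 ≤ t → N (t • x) = t * N x) ∧ (∀ x, ‖x‖ ≤ N x) ∧
      {y | ∃ θ ∈ Metric.sphere (0 : E) 1, y = rf θ • θ} = {x | N x = 1} := by
  have hs : ∀ x : E, x ≠ 0 → ‖x‖⁻¹ • x ∈ Metric.sphere (0 : E) 1 := by
    intro x hx
    have : ‖x‖ ≠ 0 := norm_ne_zero_iff.mpr hx
    simp [norm_smul, this]
  have hM1 : 0 < 1 + M := by linarith
  have hpos : ∀ θ ∈ Metric.sphere (0 : E) 1, 0 < rf θ := fun θ hθ =>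
    lt_of_lt_of_le (by positivity) (h2 θ hθ).1
  have hinv1 : ∀ θ ∈ Metric.sphere (0 : E) 1, 1 ≤ (rf θ)⁻¹ := fun θ hθ =>
    (one_le_inv₀ (hpos θ hθ)).mpr (h2 θ hθ).2
  have hinv2 : ∀ θ ∈ Metric.sphere (0 : E) 1, (rf θ)⁻¹ ≤ 1 + M := fun θ hθ => by
    have := (h2 θ hθ).1
    rw [one_div] at this
    exact inv_le_of_inv_le₀ hM1 this
  have hinvlip : ∀ θ ∈ Metric.sphere (0 : E) 1, ∀ ψ ∈ Metric.sphere (0 : E) 1,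
      |(rf θ)⁻¹ - (rf ψ)⁻¹| ≤ M * (1 + M) ^ 2 * dist θ ψ := by
    intro θ hθ ψ hψ
    have e : (rf θ)⁻¹ - (rf ψ)⁻¹ = (rf ψ - rf θ) * ((rf θ)⁻¹ * (rf ψ)⁻¹) := by
      have := (hpos θ hθ).ne'
      have := (hpos ψ hψ).ne'
      field_simp
    have p1 := hinv1 θ hθ
    have p2 := hinv1 ψ hψ
    rw [e, abs_mul, abs_of_nonneg (a := (rf θ)⁻¹ * (rf ψ)⁻¹) (by positivity), abs_sub_comm]
    calc _ ≤ (M * dist θ ψ) * ((1 + M) * (1 + M)) := by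
          gcongr
          · exact h1 θ hθ ψ hψ
          · exact hinv2 θ hθ
          · exact hinv2 ψ hψ
      _ = _ := by ring
  let N : E → ℝ := fun x => ‖x‖ * (rf (‖x‖⁻¹ • x))⁻¹
  have hN0 : N 0 = 0 := by simp [N]
  have hlow : ∀ x, ‖x‖ ≤ N x := by
    intro x
    by_cases hx : x = 0
    · simp [hx, hN0]
    · exact le_mul_of_one_le_right (norm_nonneg _) (hinv1 _ (hs x hx))
  have hup : ∀ x, N x ≤ (1 + M) * ‖x‖ := by
    intro x
    by_cases hx : x = 0
    · simp [hx, hN0]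
    · rw [mul_comm]
      exact mul_le_mul_of_nonneg_left (hinv2 _ (hs x hx)) (norm_nonneg _)
  refine ⟨N, ?_, ?_, hlow, ?_⟩
  · intro x y
    have hK : 0 ≤ 2 * M * (1 + M) ^ 2 := by positivity
    by_cases hx : x = 0
    · subst hx
      rw [hN0, zero_sub, abs_neg, zero_sub, norm_neg, abs_of_nonneg ((norm_nonneg _).trans (hlow y))]
      nlinarith [hup y, mul_nonneg hK (norm_nonneg y)]
    by_cases hy : y = 0
    · subst hy
      rw [hN0, sub_zero, sub_zero, abs_of_nonneg ((norm_nonneg _).trans (hlow x))]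
      nlinarith [hup x, mul_nonneg hK (norm_nonneg x)]
    have hx0 : ‖x‖ ≠ 0 := norm_ne_zero_iff.mpr hx
    have hy0 : ‖y‖ ≠ 0 := norm_ne_zero_iff.mpr hy
    have e : N x - N y = (‖x‖ - ‖y‖) * (rf (‖x‖⁻¹ • x))⁻¹ +
        ‖y‖ * ((rf (‖x‖⁻¹ • x))⁻¹ - (rf (‖y‖⁻¹ • y))⁻¹) := by simp only [N]; ring
    have hd : ‖y‖ * dist (‖x‖⁻¹ • x) (‖y‖⁻¹ • y) ≤ 2 * ‖x - y‖ := by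
      have e2 : ‖y‖ • (‖x‖⁻¹ • x - ‖y‖⁻¹ • y) = (x - y) + ((‖y‖ - ‖x‖) * ‖x‖⁻¹) • x := by
        rw [smul_sub, smul_smul, smul_smul, mul_inv_cancel₀ hy0, sub_mul, mul_inv_cancel₀ hx0,
          sub_smul]
        simp only [one_smul]
        abel
      calc ‖y‖ * dist (‖x‖⁻¹ • x) (‖y‖⁻¹ • y) = ‖‖y‖ • (‖x‖⁻¹ • x - ‖y‖⁻¹ • y)‖ := by
            rw [norm_smul, norm_norm, dist_eq_norm]
        _ ≤ ‖x - y‖ + ‖((‖y‖ - ‖x‖) * ‖x‖⁻¹) • x‖ := by rw [e2]; exact norm_add_le _ _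
        _ = ‖x - y‖ + |‖y‖ - ‖x‖| := by
            rw [norm_smul, Real.norm_eq_abs, abs_mul, abs_inv, abs_norm, mul_assoc,
              inv_mul_cancel₀ hx0, mul_one]
        _ ≤ _ := by
            have := abs_norm_sub_norm_le y x
            rw [norm_sub_rev] at this
            linarith
    rw [e]
    calc _ ≤ |(‖x‖ - ‖y‖) * (rf (‖x‖⁻¹ • x))⁻¹| +
        |‖y‖ * ((rf (‖x‖⁻¹ • x))⁻¹ - (rf (‖y‖⁻¹ • y))⁻¹)| := abs_add_le _ _
      _ ≤ ‖x - y‖ * (1 + M) + ‖y‖ * (M * (1 + M) ^ 2 * dist (‖x‖⁻¹ • x) (‖y‖⁻¹ • y)) := by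
        have p1 := hinv1 _ (hs x hx)
        rw [abs_mul, abs_mul, abs_norm, abs_of_nonneg (a := (rf (‖x‖⁻¹ • x))⁻¹) (by positivity)]
        gcongr
        · exact abs_norm_sub_norm_le x y
        · exact hinv2 _ (hs x hx)
        · exact hinvlip _ (hs x hx) _ (hs y hy)
      _ ≤ _ := by
        have : 0 ≤ M * (1 + M) ^ 2 := by positivity
        nlinarith [mul_le_mul_of_nonneg_left hd this]
  · intro t x ht
    rcases ht.eq_or_lt with rfl | ht
    · simp [hN0]
    · have : ‖t • x‖⁻¹ • t • x = ‖x‖⁻¹ • x := by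
        rw [norm_smul, smul_smul, Real.norm_of_nonneg ht.le, mul_inv, mul_comm t⁻¹, mul_assoc,
          inv_mul_cancel₀ ht.ne', mul_one]
      simp only [N, this]
      rw [norm_smul, Real.norm_of_nonneg ht.le, mul_assoc]
  · ext y
    constructor
    · rintro ⟨θ, hθ, rfl⟩
      have p := hpos θ hθ
      have n1 : ‖θ‖ = 1 := by simpa using hθ
      have : ‖rf θ • θ‖ = rf θ := by rw [norm_smul, n1, mul_one, Real.norm_of_nonneg p.le]
      change N _ = 1
      simp only [N, this, smul_smul, inv_mul_cancel₀ p.ne', one_smul, mul_inv_cancel₀ p.ne']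
    · intro h
      change N y = 1 at h
      have hy : y ≠ 0 := by rintro rfl; simp [hN0] at h
      have hy0 : ‖y‖ ≠ 0 := norm_ne_zero_iff.mpr hy
      refine ⟨_, hs y hy, ?_⟩
      have p := (hpos _ (hs y hy)).ne'
      have : rf (‖y‖⁻¹ • y) = ‖y‖ := by
        simp only [N] at h
        exact ((mul_inv_eq_one₀ p).mp h).symm
      rw [this, smul_smul, mul_inv_cancel₀ hy0, one_smul]

lemma radial_image {E : Type*} [NormedAddCommGroup E] [NormedSpace ℝ E] (N : E → ℝ)
    (K L' Λ η : ℝ) (hK : 0 < K) (hL' : 0 < L') (hΛ : 0 < Λ) (hη : 4 * K * L' * η ≤ 1)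
    (hlip : ∀ x y, |N x - N y| ≤ K * ‖x - y‖)
    (hhom : ∀ (t : ℝ) x, 0 ≤ t → N (t • x) = t * N x) (hlow : ∀ x, ‖x‖ ≤ N x)
    (H : E ≃ₜ E) (H0 : H 0 = 0) (Hlip : ∀ x y, ‖H x - H y‖ ≤ Λ * ‖x - y‖)
    (Hanti : ∀ x y, ‖x - y‖ ≤ L' * ‖H x - H y‖)
    (Hd : ∀ (t : ℝ) x, 1 ≤ t → ‖H (t • x) - t • H x‖ ≤ 2 * η * (t - 1) * ‖x‖) :
    ∃ ρ : E → ℝ, H '' {x | N x = 1} = {y | ∃ θ ∈ Metric.sphere (0 : E) 1, y = ρ θ • θ} ∧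
      (∀ θ ∈ Metric.sphere (0 : E) 1, ∀ ψ ∈ Metric.sphere (0 : E) 1,
        |ρ θ - ρ ψ| ≤ 2 * K * L' * Λ ^ 2 * dist θ ψ) ∧
      (∀ θ ∈ Metric.sphere (0 : E) 1, 1 / (K * L') ≤ ρ θ ∧ ρ θ ≤ Λ) := by
  let P : E → ℝ := fun y => N (H.symm y)
  have N0 : N 0 = 0 := by simpa using hhom 0 0 le_rfl
  have s0 : H.symm 0 = 0 := by rw [← H0, H.symm_apply_apply, H0]
  have P0 : P 0 = 0 := by simp [P, s0, N0]
  have Plip : ∀ x y, |P x - P y| ≤ K * L' * ‖x - y‖ := by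
    intro x y
    have h1 := hlip (H.symm x) (H.symm y)
    have h2 := Hanti (H.symm x) (H.symm y)
    simp only [H.apply_symm_apply] at h2
    calc _ ≤ _ := h1
      _ ≤ K * (L' * ‖x - y‖) := by gcongr
      _ = _ := by ring
  have Plow : ∀ y, ‖y‖ ≤ Λ * P y := by
    intro y
    have h2 := Hlip (H.symm y) 0
    rw [H0, H.apply_symm_apply, sub_zero, sub_zero] at h2
    exact h2.trans (mul_le_mul_of_nonneg_left (hlow _) hΛ.le)
  have Pinc : ∀ (t : ℝ) y, 1 ≤ t → (1 + (t - 1) / 2) * P y ≤ P (t • y) := by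
    intro t y ht
    have h1 := Hanti (t • H.symm y) (H.symm (t • y))
    have h2 := Hd t (H.symm y) ht
    rw [H.apply_symm_apply] at h1 h2
    have h3 := hlip (t • H.symm y) (H.symm (t • y))
    rw [hhom t _ (by linarith)] at h3
    have h4 : K * ‖t • H.symm y - H.symm (t • y)‖ ≤ (t - 1) / 2 * P y := by
      calc _ ≤ K * (L' * (2 * η * (t - 1) * ‖H.symm y‖)) := by
            gcongr
            exact h1.trans (mul_le_mul_of_nonneg_left h2 hL'.le)
        _ = (4 * K * L' * η) * ((t - 1) / 2 * ‖H.symm y‖) := by ring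
        _ ≤ 1 * ((t - 1) / 2 * ‖H.symm y‖) := by
            apply mul_le_mul_of_nonneg_right hη
            have : 0 ≤ t - 1 := by linarith
            positivity
        _ ≤ _ := by
            rw [one_mul]
            exact mul_le_mul_of_nonneg_left (hlow _) (by linarith)
    have h5 := (abs_le.mp (h3.trans h4)).2
    simp only [P] at *
    linarith
  have Pcont : Continuous P := by
    have : LipschitzWith (Real.toNNReal (K * L')) P := by
      apply LipschitzWith.of_dist_le_mul
      intro x y
      rw [Real.dist_eq, dist_eq_norm, Real.coe_toNNReal _ (by positivity)]
      exact Plip x y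
    exact this.continuous
  have hex : ∀ θ : E, ∃ ρ : ℝ, θ ∈ Metric.sphere (0 : E) 1 → 0 < ρ ∧ P (ρ • θ) = 1 := by
    intro θ
    by_cases hθ : θ ∈ Metric.sphere (0 : E) 1
    swap
    · exact ⟨0, fun h => absurd h hθ⟩
    have n1 : ‖θ‖ = 1 := by simpa using hθ
    have hc : ContinuousOn (fun t : ℝ => P (t • θ)) (Icc 0 Λ) := by fun_prop
    have := intermediate_value_Icc hΛ.le hc
    have hm : (1 : ℝ) ∈ Icc (P ((0 : ℝ) • θ)) (P (Λ • θ)) := by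
      constructor
      · simp [P0]
      · have := Plow (Λ • θ)
        rw [norm_smul, n1, Real.norm_of_nonneg hΛ.le] at this
        exact le_of_mul_le_mul_left this hΛ
    obtain ⟨ρ, hρ, h⟩ := this hm
    refine ⟨ρ, fun _ => ⟨lt_of_le_of_ne hρ.1 ?_, h⟩⟩
    rintro rfl
    simp [P0] at h
  choose ρ hρ using hex
  have key : ∀ θ ∈ Metric.sphere (0 : E) 1, ∀ ψ ∈ Metric.sphere (0 : E) 1, ∀ a b : ℝ,
      0 < a → a ≤ b → P (a • θ) = 1 → P (b • ψ) = 1 → b - a ≤ 2 * (K * L') * a * b * ‖θ - ψ‖ := by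
    intro θ hθ ψ hψ a b ha hab h1 h2
    have h3 := Pinc (b / a) (a • θ) ((one_le_div ha).mpr hab)
    rw [smul_smul, div_mul_cancel₀ _ ha.ne', h1] at h3
    have h4 := (abs_le.mp (Plip (b • θ) (b • ψ))).2
    rw [← smul_sub, norm_smul, Real.norm_of_nonneg (ha.le.trans hab), h2] at h4
    have h5 : b / a - 1 ≤ 2 * (K * L' * (b * ‖θ - ψ‖)) := by linarith
    have : b - a = a * (b / a - 1) := by field_simp
    rw [this]
    calc _ ≤ a * (2 * (K * L' * (b * ‖θ - ψ‖))) := by gcongr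
      _ = _ := by ring
  have bd : ∀ θ ∈ Metric.sphere (0 : E) 1, 1 / (K * L') ≤ ρ θ ∧ ρ θ ≤ Λ := by
    intro θ hθ
    obtain ⟨p, h⟩ := hρ θ hθ
    have n1 : ‖θ‖ = 1 := by simpa using hθ
    have a1 := Plow (ρ θ • θ)
    rw [norm_smul, n1, Real.norm_of_nonneg p.le, h] at a1
    have a2 := (abs_le.mp (Plip (ρ θ • θ) 0)).2
    rw [h, P0, sub_zero, sub_zero, norm_smul, n1, Real.norm_of_nonneg p.le] at a2
    refine ⟨?_, by linarith⟩
    rw [div_le_iff₀ (by positivity)]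
    linarith
  refine ⟨ρ, ?_, ?_, bd⟩
  · ext y
    have : y ∈ H '' {x | N x = 1} ↔ P y = 1 := by
      constructor
      · rintro ⟨x, hx, rfl⟩
        simpa [P] using hx
      · intro h
        exact ⟨H.symm y, h, H.apply_symm_apply y⟩
    rw [this]
    constructor
    · intro h
      have hy : y ≠ 0 := by rintro rfl; simp [P0] at h
      have hy0 : ‖y‖ ≠ 0 := norm_ne_zero_iff.mpr hy
      have hs : ‖y‖⁻¹ • y ∈ Metric.sphere (0 : E) 1 := by simp [norm_smul, hy0]
      obtain ⟨p, h'⟩ := hρ _ hs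
      have e : ‖y‖ • (‖y‖⁻¹ • y) = y := by rw [smul_smul, mul_inv_cancel₀ hy0, one_smul]
      have h'' : P (‖y‖ • (‖y‖⁻¹ • y)) = 1 := by rw [e, h]
      refine ⟨_, hs, ?_⟩
      have : ρ (‖y‖⁻¹ • y) = ‖y‖ := by
        rcases le_total (ρ (‖y‖⁻¹ • y)) ‖y‖ with hle | hle
        · have := key _ hs _ hs _ _ p hle h' h''
          rw [sub_self, norm_zero, mul_zero] at this
          linarith
        · have := key _ hs _ hs _ _ (norm_pos_iff.mpr hy) hle h'' h'
          rw [sub_self, norm_zero, mul_zero] at this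
          linarith
      rw [this, e]
    · rintro ⟨θ, hθ, rfl⟩
      exact (hρ θ hθ).2
  · have main : ∀ θ ∈ Metric.sphere (0 : E) 1, ∀ ψ ∈ Metric.sphere (0 : E) 1, ρ θ ≤ ρ ψ →
        |ρ θ - ρ ψ| ≤ 2 * K * L' * Λ ^ 2 * dist θ ψ := by
      intro θ hθ ψ hψ hle
      have h := key θ hθ ψ hψ _ _ (hρ θ hθ).1 hle (hρ θ hθ).2 (hρ ψ hψ).2
      rw [abs_sub_comm, abs_of_nonneg (by linarith), dist_eq_norm]
      have p1 := (hρ θ hθ).1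
      have p2 := (hρ ψ hψ).1
      calc _ ≤ _ := h
        _ ≤ 2 * (K * L') * Λ * Λ * ‖θ - ψ‖ := by
          gcongr
          · exact (bd θ hθ).2
          · exact (bd ψ hψ).2
        _ = _ := by ring
    intro θ hθ ψ hψ
    rcases le_total (ρ θ) (ρ ψ) with hle | hle
    · exact main θ hθ ψ hψ hle
    · rw [abs_sub_comm, dist_comm]
      exact main ψ hψ θ hθ hle

lemma quasi {E : Type*} [NormedAddCommGroup E] [InnerProductSpace ℝ E] (N : E → ℝ)
    (K η : ℝ) (hK : 1 ≤ K) (hη : 0 ≤ η)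
    (hlip : ∀ x y, |N x - N y| ≤ K * ‖x - y‖)
    (hhom : ∀ (t : ℝ) x, 0 ≤ t → N (t • x) = t * N x) (hlow : ∀ x, ‖x‖ ≤ N x)
    (Ω : Set E) (ho : IsOpen Ω) (hc : IsPreconnected Ω) (hF : frontier Ω = {x | N x = 1})
    (e : E → E)
    (hseg : ∀ x y, segment ℝ x y ⊆ Ω → ‖e x - e y‖ ≤ η * ‖x - y‖)
    (hdim : (∀ x ∈ Ω, ∀ y ∈ Ω, segment ℝ x y ⊆ Ω) ∨
      (∀ x : E, ∃ v : E, ‖v‖ = 1 ∧ inner ℝ x v = 0)) :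
    ∀ x ∈ Ω, ∀ y ∈ Ω, ‖e x - e y‖ ≤ η * ((24 * K + 12) * ‖x - y‖) := by
  intro x hx y hy
  rcases hdim with hcv | hdim
  · refine (hseg x y (hcv x hx y hy)).trans ?_
    gcongr
    nlinarith [norm_nonneg (x - y)]
  have hmem : ∀ z, z ∈ frontier Ω ↔ N z = 1 := fun z => by rw [hF]; rfl
  have hne : ∀ z ∈ Ω, N z ≠ 1 := by
    intro z hz h
    have := (hmem z).mpr h
    rw [ho.frontier_eq] at this
    exact this.2 hz
  have hNc : Continuous N := by
    have : LipschitzWith (Real.toNNReal K) N := by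
      apply LipschitzWith.of_dist_le_mul
      intro x y
      rw [Real.dist_eq, dist_eq_norm, Real.coe_toNNReal _ (by positivity)]
      exact hlip x y
    exact this.continuous
  have step : ∀ x ∈ Ω, ∀ y, (∀ t ∈ Icc (0 : ℝ) 1, N ((1 - t) • x + t • y) ≠ 1) →
      y ∈ Ω ∧ ‖e x - e y‖ ≤ η * ‖x - y‖ := by
    intro x hx y h
    have hs : segment ℝ x y ⊆ Ω := by
      have hp : IsPreconnected (segment ℝ x y) := (convex_segment x y).isPreconnected
      refine hp.subset_left_of_subset_union ho isClosed_closure.isOpen_compl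
        (disjoint_compl_right.mono_left subset_closure |>.mono_right (by exact le_rfl)) ?_
        ⟨x, left_mem_segment ℝ x y, hx⟩
      intro w hw
      by_cases hwΩ : w ∈ Ω
      · exact Or.inl hwΩ
      · right
        intro hwc
        have hwf : w ∈ frontier Ω := by rw [ho.frontier_eq]; exact ⟨hwc, hwΩ⟩
        rw [segment_eq_image] at hw
        obtain ⟨t, ht, rfl⟩ := hw
        exact h t ht ((hmem _).mp hwf)
    exact ⟨hs (right_mem_segment ℝ x y), hseg x y hs⟩
  have hKx := mul_nonneg (zero_le_one.trans hK) (norm_nonneg (x - y))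
  have hKx1 : ‖x - y‖ ≤ K * ‖x - y‖ := le_mul_of_one_le_left (norm_nonneg _) hK
  -- both on the same side
  have same : N x < 1 ↔ N y < 1 := by
    have hpi : IsPreconnected (N '' Ω) := hc.image N hNc.continuousOn
    have hoc := hpi.ordConnected
    constructor
    · intro h
      by_contra h'
      obtain ⟨z, hz, h1⟩ := hoc.out (mem_image_of_mem N hx) (mem_image_of_mem N hy)
        ⟨h.le, not_lt.mp h'⟩
      exact hne z hz h1
    · intro h
      by_contra h'
      obtain ⟨z, hz, h1⟩ := hoc.out (mem_image_of_mem N hy) (mem_image_of_mem N hx)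
        ⟨h.le, not_lt.mp h'⟩
      exact hne z hz h1
  have tri3 : ∀ a b : E, ‖e x - e y‖ ≤ ‖e x - e a‖ + ‖e a - e b‖ + ‖e b - e y‖ := by
    intro a b
    have : e x - e y = (e x - e a) + (e a - e b) + (e b - e y) := by abel
    rw [this]
    exact norm_add₃_le
  have lin : ∀ (x : E) (s t : ℝ), (1 - t) • x + t • s • x = (1 - t + t * s) • x := by
    intro x s t; rw [smul_smul, add_smul]
  have lin' : ∀ (x : E) (s t : ℝ), (1 - t) • s • x + t • x = ((1 - t) * s + t) • x := by
    intro x s t; rw [smul_smul, add_smul]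
  have mid : ∀ (s t : ℝ), 0 ≤ s → t ∈ Icc (0 : ℝ) 1 →
      |N ((1 - t) • s • x + t • s • y) - s * N x| ≤ s * (K * ‖x - y‖) := by
    intro s t hs ht
    have h1 := hlip ((1 - t) • s • x + t • s • y) (s • x)
    have h2 : (1 - t) • s • x + t • s • y - s • x = (t * s) • (y - x) := by
      module
    rw [hhom s x hs, h2, norm_smul, Real.norm_of_nonneg (mul_nonneg ht.1 hs), norm_sub_rev] at h1
    refine h1.trans ?_
    have : t * s ≤ s := mul_le_of_le_one_left hs ht.2
    calc _ ≤ K * (s * ‖x - y‖) := by gcongr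
      _ = _ := by ring
  have midlen : ∀ s : ℝ, 0 ≤ s → ‖s • x - s • y‖ = s * ‖x - y‖ := by
    intro s hs
    rw [← smul_sub, norm_smul, Real.norm_of_nonneg hs]
  have endlen : ∀ (x : E) (s : ℝ), ‖x - s • x‖ = |s - 1| * ‖x‖ := by
    intro x s
    have : x - s • x = (1 - s) • x := by module
    rw [this, norm_smul, Real.norm_eq_abs, abs_sub_comm]
  have endlen' : ∀ (x : E) (s : ℝ), ‖s • x - x‖ = |s - 1| * ‖x‖ := by
    intro x s
    rw [norm_sub_rev, endlen]
  by_cases hx1 : N x < 1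
  · have hy1 := same.mp hx1
    obtain ⟨s, hs0, hs1, hs2, hs3⟩ : ∃ s : ℝ, 0 ≤ s ∧ s ≤ 1 ∧ 1 - s ≤ K * ‖x - y‖ ∧
        (s = 0 ∨ 1 - s = K * ‖x - y‖) := by
      by_cases h : K * ‖x - y‖ < 1
      · exact ⟨1 - K * ‖x - y‖, by linarith, by linarith, by linarith, Or.inr (by ring)⟩
      · exact ⟨0, le_rfl, zero_le_one, by linarith, Or.inl rfl⟩
    have hNx := (norm_nonneg x).trans (hlow x)
    have hNy := (norm_nonneg y).trans (hlow y)
    obtain ⟨a1, b1⟩ := step x hx (s • x) (by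
      intro t ht
      have h0 : 0 ≤ 1 - t + t * s := by nlinarith [ht.1, ht.2]
      have h1 : 1 - t + t * s ≤ 1 := by nlinarith [ht.1, ht.2]
      rw [lin, hhom _ _ h0]
      nlinarith [ht.1, ht.2])
    obtain ⟨a2, b2⟩ := step (s • x) a1 (s • y) (by
      intro t ht
      have h1 := (abs_le.mp (mid s t hs0 ht)).2
      apply ne_of_lt
      rcases hs3 with rfl | h3
      · linarith
      · rw [← h3] at h1
        rcases hs0.eq_or_lt with h0 | h0
        · rw [← h0] at h1 ⊢
          linarith
        · have : s * N x < s * 1 := mul_lt_mul_of_pos_left hx1 h0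
          nlinarith [sq_nonneg (1 - s)])
    obtain ⟨a3, b3⟩ := step (s • y) a2 y (by
      intro t ht
      have h0 : 0 ≤ (1 - t) * s + t := by nlinarith [ht.1, ht.2]
      have h1 : (1 - t) * s + t ≤ 1 := by nlinarith [ht.1, ht.2]
      rw [lin', hhom _ _ h0]
      nlinarith [ht.1, ht.2])
    refine (tri3 (s • x) (s • y)).trans ((add_le_add (add_le_add b1 b2) b3).trans ?_)
    rw [← mul_add, ← mul_add, midlen s hs0, endlen, endlen', abs_sub_comm,
      abs_of_nonneg (by linarith : 0 ≤ 1 - s)]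
    gcongr
    have := hlow x
    have := hlow y
    nlinarith [norm_nonneg x, norm_nonneg y, norm_nonneg (x - y)]
  · have hy1 : ¬ N y < 1 := fun h => hx1 (same.mpr h)
    have hx1 : 1 < N x := lt_of_le_of_ne (not_lt.mp hx1) (hne x hx).symm
    have hy1 : 1 < N y := lt_of_le_of_ne (not_lt.mp hy1) (hne y hy).symm
    have hyx : ‖y‖ ≤ ‖x‖ + ‖x - y‖ := by
      have := norm_sub_le x (x - y)
      rwa [sub_sub_cancel] at this
    have outx : ∀ (z : E) (s t : ℝ), 1 < N z → 1 ≤ s → t ∈ Icc (0 : ℝ) 1 →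
        N ((1 - t) • z + t • s • z) ≠ 1 := by
      intro z s t hz hs ht
      have h1 : 1 ≤ 1 - t + t * s := by nlinarith [ht.1, ht.2]
      rw [lin, hhom _ _ (by linarith)]
      nlinarith
    have outy : ∀ (z : E) (s t : ℝ), 1 < N z → 1 ≤ s → t ∈ Icc (0 : ℝ) 1 →
        N ((1 - t) • s • z + t • z) ≠ 1 := by
      intro z s t hz hs ht
      have h1 : 1 ≤ (1 - t) * s + t := by nlinarith [ht.1, ht.2]
      rw [lin', hhom _ _ (by linarith)]
      nlinarith
    by_cases hcase : K * ‖x - y‖ ≤ N x / 2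
    · have hden : 0 < N x - K * ‖x - y‖ := by linarith
      obtain ⟨s, hs⟩ : ∃ s : ℝ, s = N x / (N x - K * ‖x - y‖) := ⟨_, rfl⟩
      have hs' : s * (N x - K * ‖x - y‖) = N x := by rw [hs]; field_simp
      have hs1 : 1 ≤ s := by rw [hs, one_le_div hden]; linarith
      have hs2 : s ≤ 2 := by rw [hs, div_le_iff₀ hden]; linarith
      obtain ⟨a1, b1⟩ := step x hx (s • x) (fun t ht => outx x s t hx1 hs1 ht)
      obtain ⟨a2, b2⟩ := step (s • x) a1 (s • y) (by
        intro t ht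
        have h1 := (abs_le.mp (mid s t (by linarith) ht)).1
        apply ne_of_gt
        nlinarith)
      obtain ⟨a3, b3⟩ := step (s • y) a2 y (fun t ht => outy y s t hy1 hs1 ht)
      refine (tri3 (s • x) (s • y)).trans ((add_le_add (add_le_add b1 b2) b3).trans ?_)
      rw [← mul_add, ← mul_add, midlen s (by linarith), endlen, endlen',
        abs_of_nonneg (by linarith : 0 ≤ s - 1)]
      gcongr
      have h1 := hlow x
      have h2 : (s - 1) * N x ≤ 2 * (K * ‖x - y‖) := by nlinarith
      have h3 : (s - 1) * ‖x‖ ≤ 2 * (K * ‖x - y‖) :=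
        (mul_le_mul_of_nonneg_left h1 (by linarith)).trans h2
      have h4 : (s - 1) * ‖y‖ ≤ (s - 1) * ‖x‖ + (s - 1) * ‖x - y‖ := by
        rw [← mul_add]; exact mul_le_mul_of_nonneg_left hyx (by linarith)
      nlinarith [norm_nonneg (x - y)]
    · have hcase := not_le.mp hcase
      obtain ⟨ρ, hρ⟩ : ∃ ρ : ℝ, ρ = 2 * ((2 * K + 1) * ‖x - y‖) := ⟨_, rfl⟩
      have hlx := hlow x
      have hxρ : ‖x‖ ≤ ρ := by nlinarith [norm_nonneg (x - y)]
      have hyρ : ‖y‖ ≤ ρ := by nlinarith [norm_nonneg (x - y)]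
      have hρ2 : 2 < ρ := by nlinarith [norm_nonneg (x - y)]
      have N0 : N 0 = 0 := by simpa using hhom 0 0 le_rfl
      have hx0 : 0 < ‖x‖ := by
        rw [norm_pos_iff]; rintro rfl; linarith
      have hy0 : 0 < ‖y‖ := by
        rw [norm_pos_iff]; rintro rfl; linarith
      obtain ⟨v, hv1, hvx, hvy⟩ : ∃ v : E, ‖v‖ = 1 ∧ inner ℝ x v = 0 ∧ 0 ≤ inner ℝ v y := by
        obtain ⟨v, hv1, hvx⟩ := hdim x
        rcases le_total 0 (inner ℝ v y) with h | h
        · exact ⟨v, hv1, hvx, h⟩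
        · exact ⟨-v, by rw [norm_neg, hv1], by rw [inner_neg_right, hvx, neg_zero],
            by rw [inner_neg_left]; linarith⟩
      have far : ∀ a b : E, ‖a‖ = ρ → ‖b‖ = ρ → 0 ≤ inner ℝ a b → ∀ t ∈ Icc (0 : ℝ) 1,
          N ((1 - t) • a + t • b) ≠ 1 := by
        intro a b ha hb hab t ht
        have h1 := norm_add_sq_real ((1 - t) • a) (t • b)
        rw [norm_smul, norm_smul, ha, hb, Real.norm_of_nonneg ht.1,
          Real.norm_of_nonneg (by linarith [ht.2] : 0 ≤ 1 - t), inner_smul_left,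
          inner_smul_right] at h1
        have h2 : 0 ≤ (1 - t) * (t * inner ℝ a b) :=
          mul_nonneg (by linarith [ht.2]) (mul_nonneg ht.1 hab)
        simp only [conj_trivial] at h1
        have h3 : ρ ^ 2 / 2 ≤ ‖(1 - t) • a + t • b‖ ^ 2 := by
          rw [h1]
          nlinarith [mul_nonneg (sq_nonneg (1 - 2 * t)) (sq_nonneg ρ)]
        have h4 : 1 < ‖(1 - t) • a + t • b‖ := by
          nlinarith [norm_nonneg ((1 - t) • a + t • b)]
        exact ne_of_gt (h4.trans_le (hlow _))
      have hsx : 1 ≤ ρ / ‖x‖ := (one_le_div hx0).mpr hxρ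
      have hsy : 1 ≤ ρ / ‖y‖ := (one_le_div hy0).mpr hyρ
      have nx : ‖(ρ / ‖x‖) • x‖ = ρ := by
        rw [norm_smul, Real.norm_of_nonneg (by linarith)]; field_simp
      have ny : ‖(ρ / ‖y‖) • y‖ = ρ := by
        rw [norm_smul, Real.norm_of_nonneg (by linarith)]; field_simp
      have nv : ‖ρ • v‖ = ρ := by
        rw [norm_smul, Real.norm_of_nonneg (by linarith), hv1, mul_one]
      obtain ⟨a1, b1⟩ := step x hx _ (fun t ht => outx x (ρ / ‖x‖) t hx1 hsx ht)
      obtain ⟨a2, b2⟩ := step _ a1 (ρ • v) (far _ _ nx nv (by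
        rw [inner_smul_left, inner_smul_right, hvx]; simp))
      obtain ⟨a3, b3⟩ := step _ a2 ((ρ / ‖y‖) • y) (far _ _ nv ny (by
        rw [inner_smul_left, inner_smul_right]
        simp only [conj_trivial]
        exact mul_nonneg (by linarith) (mul_nonneg (by linarith) hvy)))
      obtain ⟨a4, b4⟩ := step _ a3 y (fun t ht => outy y (ρ / ‖y‖) t hy1 hsy ht)
      have c1 : ‖x - (ρ / ‖x‖) • x‖ ≤ ρ := by
        rw [endlen, abs_of_nonneg (by linarith)]
        have : (ρ / ‖x‖ - 1) * ‖x‖ = ρ - ‖x‖ := by field_simp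
        linarith
      have c4 : ‖(ρ / ‖y‖) • y - y‖ ≤ ρ := by
        rw [endlen', abs_of_nonneg (by linarith)]
        have : (ρ / ‖y‖ - 1) * ‖y‖ = ρ - ‖y‖ := by field_simp
        linarith
      have c2 : ‖(ρ / ‖x‖) • x - ρ • v‖ ≤ 2 * ρ := by
        have := norm_sub_le ((ρ / ‖x‖) • x) (ρ • v); linarith
      have c3 : ‖ρ • v - (ρ / ‖y‖) • y‖ ≤ 2 * ρ := by
        have := norm_sub_le (ρ • v) ((ρ / ‖y‖) • y); linarith
      have h1 := tri3 ((ρ / ‖x‖) • x) (ρ • v)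
      have h2 : ‖e (ρ • v) - e y‖ ≤ ‖e (ρ • v) - e ((ρ / ‖y‖) • y)‖ + ‖e ((ρ / ‖y‖) • y) - e y‖ :=
        norm_sub_le_norm_sub_add_norm_sub _ _ _
      have : (24 * K + 12) * ‖x - y‖ = 6 * ρ := by rw [hρ]; ring
      rw [this]
      have d1 := b1.trans (mul_le_mul_of_nonneg_left c1 hη)
      have d2 := b2.trans (mul_le_mul_of_nonneg_left c2 hη)
      have d3 := b3.trans (mul_le_mul_of_nonneg_left c3 hη)
      have d4 := b4.trans (mul_le_mul_of_nonneg_left c4 hη)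
      have d5 : η * (6 * ρ) = η * ρ + η * (2 * ρ) + (η * (2 * ρ) + η * ρ) := by ring
      rw [d5]
      linarith only [h1, h2, d1, d2, d3, d4]

lemma exists_homeo {E : Type*} [NormedAddCommGroup E] [NormedSpace ℝ E] [CompleteSpace E]
    (A : E ≃L[ℝ] E) (u : E → E) (η : ℝ≥0) (m : ℝ) (hη : (η : ℝ) < m)
    (hA : ∀ v, m * ‖v‖ ≤ ‖A v‖) (hu : LipschitzWith η u) :
    ∃ H : E ≃ₜ E, ∀ x, H x = A x + u x := by
  have hm : 0 < m := lt_of_le_of_lt η.coe_nonneg hη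
  have happ : ApproximatesLinearOn (fun x => A x + u x) (A : E →L[ℝ] E) univ η := by
    rw [ApproximatesLinearOn.approximatesLinearOn_iff_lipschitzOnWith, lipschitzOnWith_univ]
    convert hu using 1
    ext x
    simp
  have hc : Subsingleton E ∨ η < ‖(A.symm : E →L[ℝ] E)‖₊⁻¹ := by
    rcases subsingleton_or_nontrivial E with h | h
    · exact Or.inl h
    · right
      have hpos : 0 < ‖(A.symm : E →L[ℝ] E)‖ := A.norm_symm_pos
      have hle : ‖(A.symm : E →L[ℝ] E)‖ ≤ m⁻¹ := by
        apply ContinuousLinearMap.opNorm_le_bound _ (by positivity)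
        intro y
        have := hA (A.symm y)
        rw [A.apply_symm_apply] at this
        rw [inv_mul_eq_div, le_div_iff₀ hm, mul_comm]
        exact this
      rw [← NNReal.coe_lt_coe, NNReal.coe_inv, coe_nnnorm]
      refine lt_of_lt_of_le hη ?_
      rw [le_inv_comm₀ hm hpos]
      exact hle
  exact ⟨happ.toHomeomorph _ hc, fun x => rfl⟩

lemma dim_alt (d : ℕ) (Ω : Set (EuclideanSpace ℝ (Fin (d + 1)))) (hc : IsPreconnected Ω) :
    (∀ x ∈ Ω, ∀ y ∈ Ω, segment ℝ x y ⊆ Ω) ∨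
      (∀ x : EuclideanSpace ℝ (Fin (d + 1)), ∃ v : EuclideanSpace ℝ (Fin (d + 1)),
        ‖v‖ = 1 ∧ inner ℝ x v = 0) := by
  rcases d with _ | d
  · left
    intro x hx y hy
    have hp : IsPreconnected ((fun z : EuclideanSpace ℝ (Fin (0 + 1)) => z 0) '' Ω) :=
      hc.image _ (by fun_prop)
    have hcv := hp.ordConnected.convex (𝕜 := ℝ)
    intro z hz
    obtain ⟨a, b, ha, hb, hab, rfl⟩ := hz
    obtain ⟨w, hw, h⟩ := hcv (mem_image_of_mem _ hx) (mem_image_of_mem _ hy) ha hb hab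
    have : a • x + b • y = w := by
      ext i
      have : i = 0 := by fin_cases i; rfl
      subst this
      simpa using h.symm
    rw [this]
    exact hw
  · right
    intro x
    have hlt : (Submodule.span ℝ {x}) ≠ ⊤ := by
      intro h
      have h1 := finrank_span_le_card (R := ℝ) ({x} : Set (EuclideanSpace ℝ (Fin (d + 1 + 1))))
      rw [h, finrank_top, finrank_euclideanSpace] at h1
      simp at h1
    have hne : (Submodule.span ℝ {x})ᗮ ≠ ⊥ := fun h => hlt (Submodule.orthogonal_eq_bot_iff.mp h)
    obtain ⟨v, hv, hv0⟩ := Submodule.exists_mem_ne_zero_of_ne_bot hne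
    have hn : ‖v‖ ≠ 0 := norm_ne_zero_iff.mpr hv0
    refine ⟨‖v‖⁻¹ • v, by simp [norm_smul, hn], ?_⟩
    rw [inner_smul_right, Submodule.mem_orthogonal_singleton_iff_inner_right.mp hv, mul_zero]

lemma normalized (d : ℕ) (M L K C η₀ δ₀ : ℝ) (hM : 0 ≤ M) (hL : 0 < L)
    (hKd : K = (1 + M) + 2 * M * (1 + M) ^ 2) (hCd : C = 24 * K + 12)
    (hη₀ : η₀ = 1 / (8 * K * (L + 1)))
    (hδ₀ : δ₀ = η₀ / (lipschitzExtensionConstant (EuclideanSpace ℝ (Fin (d + 1))) * (L * C)))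
    (Ω : Set (EuclideanSpace ℝ (Fin (d + 1))))
    (ho : IsOpen Ω) (hc : IsConnected Ω)
    (rf : EuclideanSpace ℝ (Fin (d + 1)) → ℝ)
    (hF : frontier Ω =
      {y | ∃ θ ∈ Metric.sphere (0 : EuclideanSpace ℝ (Fin (d + 1))) 1, y = rf θ • θ})
    (h1 : ∀ θ ∈ Metric.sphere (0 : EuclideanSpace ℝ (Fin (d + 1))) 1,
      ∀ ψ ∈ Metric.sphere (0 : EuclideanSpace ℝ (Fin (d + 1))) 1,
        |rf θ - rf ψ| ≤ M * dist θ ψ)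
    (h2 : ∀ θ ∈ Metric.sphere (0 : EuclideanSpace ℝ (Fin (d + 1))) 1,
      1 / (1 + M) ≤ rf θ ∧ rf θ ≤ 1)
    (g : EuclideanSpace ℝ (Fin (d + 1)) → EuclideanSpace ℝ (Fin (d + 1))) (δ : ℝ)
    (hδ : 0 < δ) (hδ' : δ < δ₀)
    (Dg : EuclideanSpace ℝ (Fin (d + 1)) →
      EuclideanSpace ℝ (Fin (d + 1)) →L[ℝ] EuclideanSpace ℝ (Fin (d + 1)))
    (hg : ∀ z ∈ Ω, HasFDerivAt g (Dg z) z)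
    (hbi : ∀ z ∈ Ω, ∀ z' ∈ Ω,
          L⁻¹ * dist z z' ≤ dist (g z) (g z') ∧ dist (g z) (g z') ≤ L * dist z z')
    (hB : ∀ w ∈ Ω, ∃ B : EuclideanSpace ℝ (Fin (d + 1)) →L[ℝ] EuclideanSpace ℝ (Fin (d + 1)),
          (Dg w).comp B = ContinuousLinearMap.id ℝ (EuclideanSpace ℝ (Fin (d + 1))) ∧
          B.comp (Dg w) = ContinuousLinearMap.id ℝ (EuclideanSpace ℝ (Fin (d + 1))) ∧
          ∀ z ∈ Ω, ‖(Dg z).comp B -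
            ContinuousLinearMap.id ℝ (EuclideanSpace ℝ (Fin (d + 1)))‖ ≤ δ) :
    IsLipschitzGraphDomain d (2 * K * (2 * L) * (L + 1)) (g '' Ω) := by
  obtain ⟨N, hlip, hhom, hlow, hN⟩ := gauge_exists M hM rf h1 h2
  rw [← hKd] at hlip
  rw [hN] at hF
  have hK : 1 ≤ K := by
    rw [hKd]
    have : 0 ≤ 2 * M * (1 + M) ^ 2 := by positivity
    linarith
  have hC : 0 < C := by linarith
  set κ := lipschitzExtensionConstant (EuclideanSpace ℝ (Fin (d + 1))) with hκd
  have hκ : 0 < (κ : ℝ) := NNReal.coe_pos.mpr (lipschitzExtensionConstant_pos _)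
  have hη0 : 0 < η₀ := by rw [hη₀]; positivity
  have hη8 : η₀ ≤ (8 * L)⁻¹ := by
    rw [hη₀, one_div]
    apply inv_anti₀ (by positivity)
    nlinarith
  have hη1 : η₀ ≤ 1 := by
    rw [hη₀, div_le_one (by positivity)]
    nlinarith
  have hηK : 4 * K * (2 * L) * η₀ ≤ 1 := by
    rw [hη₀, mul_one_div, div_le_one (by positivity)]
    nlinarith
  obtain ⟨w0, hw0⟩ := hc.nonempty
  obtain ⟨B, hAB, hBA, hBz⟩ := hB w0 hw0
  obtain ⟨A, hA⟩ : ∃ A : EuclideanSpace ℝ (Fin (d + 1)) ≃L[ℝ] EuclideanSpace ℝ (Fin (d + 1)),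
      (A : EuclideanSpace ℝ (Fin (d + 1)) →L[ℝ] EuclideanSpace ℝ (Fin (d + 1))) = Dg w0 := by
    refine ⟨ContinuousLinearEquiv.equivOfInverse (Dg w0) B (fun x => ?_) (fun x => ?_), ?_⟩
    · exact DFunLike.congr_fun hBA x
    · exact DFunLike.congr_fun hAB x
    · ext; rfl
  have hnA : ‖Dg w0‖ ≤ L := by
    have hl : LipschitzOnWith (Real.toNNReal L) g Ω := by
      apply LipschitzOnWith.of_dist_le_mul
      intro x hx y hy
      rw [Real.coe_toNNReal _ hL.le]
      exact (hbi x hx y hy).2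
    have := (hg w0 hw0).le_of_lipschitzOn (ho.mem_nhds hw0) hl
    rwa [Real.coe_toNNReal _ hL.le] at this
  have hDe : ∀ z ∈ Ω, ‖Dg z - Dg w0‖ ≤ δ * L := by
    intro z hz
    have e : Dg z - Dg w0 = ((Dg z).comp B -
        ContinuousLinearMap.id ℝ (EuclideanSpace ℝ (Fin (d + 1)))).comp (Dg w0) := by
      ext1 v
      have hv : B (Dg w0 v) = v := DFunLike.congr_fun hBA v
      simp [hv]
    rw [e]
    exact (ContinuousLinearMap.opNorm_comp_le _ _).trans
      (mul_le_mul (hBz z hz) hnA (norm_nonneg _) hδ.le)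
  have heL : ∀ x ∈ Ω, ∀ y ∈ Ω, ‖(g x - A x) - (g y - A y)‖ ≤ δ * L * (C * ‖x - y‖) := by
    rw [hCd]
    apply quasi N K (δ * L) hK (by positivity) hlip hhom hlow Ω ho hc.isPreconnected hF
      (fun x => g x - A x)
    · intro x y hs
      apply Convex.norm_image_sub_le_of_norm_hasFDerivWithin_le
        (f := fun x => g x - A x) (f' := fun z => Dg z - Dg w0) (s := segment ℝ x y)
      · intro z hz
        have := (hg z (hs hz)).sub A.hasFDerivAt
        rw [hA] at this
        exact this.hasFDerivWithinAt
      · exact fun z hz => hDe z (hs hz)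
      · exact convex_segment x y
      · exact right_mem_segment ℝ x y
      · exact left_mem_segment ℝ x y
    · exact dim_alt d Ω hc.isPreconnected
  have hkk : 0 ≤ δ * L * C := by positivity
  have hLip : LipschitzOnWith (Real.toNNReal (δ * L * C)) (fun x => g x - A x) Ω := by
    apply LipschitzOnWith.of_dist_le_mul
    intro x hx y hy
    rw [Real.coe_toNNReal _ hkk, dist_eq_norm, dist_eq_norm]
    refine (heL x hx y hy).trans (le_of_eq (by ring))
  obtain ⟨u, hu, hueq⟩ := hLip.extend_finite_dimension
  have hconst : κ * Real.toNNReal (δ * L * C) ≤ Real.toNNReal η₀ := by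
    rw [← NNReal.coe_le_coe, NNReal.coe_mul, Real.coe_toNNReal _ hkk, Real.coe_toNNReal _ hη0.le]
    rw [hδ₀, lt_div_iff₀ (by positivity)] at hδ'
    linarith
  have hu' : LipschitzWith (Real.toNNReal η₀) u := hu.weaken hconst
  have hu2 : ∀ x y, ‖u x - u y‖ ≤ η₀ * ‖x - y‖ := by
    intro x y
    have := hu'.dist_le_mul x y
    rwa [Real.coe_toNNReal _ hη0.le, dist_eq_norm, dist_eq_norm] at this
  have hgu : ∀ x ∈ Ω, g x = A x + u x := by
    intro x hx
    have := hueq hx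
    simp only at this
    rw [← this]; abel
  have hAlow : ∀ v, (L⁻¹ - η₀) * ‖v‖ ≤ ‖A v‖ := by
    intro v
    obtain ⟨t, ht, htΩ⟩ : ∃ t : ℝ, 0 < t ∧ w0 + t • v ∈ Ω := by
      have hcont : ContinuousAt (fun t : ℝ => w0 + t • v) 0 := by fun_prop
      have hn : Ω ∈ nhds ((fun t : ℝ => w0 + t • v) 0) := by
        simpa using ho.mem_nhds hw0
      have := hcont.preimage_mem_nhds hn
      obtain ⟨ε, hε, hb⟩ := Metric.mem_nhds_iff.mp this
      refine ⟨ε / 2, by positivity, hb ?_⟩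
      rw [Metric.mem_ball, Real.dist_eq, sub_zero, abs_of_pos (by positivity)]
      linarith
    have a1 := (hbi _ htΩ _ hw0).1
    have a2 := hu2 (w0 + t • v) w0
    rw [hgu _ htΩ, hgu _ hw0, dist_eq_norm, dist_eq_norm] at a1
    have e1 : A (w0 + t • v) + u (w0 + t • v) - (A w0 + u w0) =
        t • A v + (u (w0 + t • v) - u w0) := by
      rw [map_add, map_smul]; abel
    have a3 := norm_add_le (t • A v) (u (w0 + t • v) - u w0)
    rw [e1] at a1
    rw [add_sub_cancel_left, norm_smul, Real.norm_of_nonneg ht.le] at a1 a2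
    rw [norm_smul, Real.norm_of_nonneg ht.le] at a3
    apply le_of_mul_le_mul_left _ ht
    linarith
  have hLi : (8 * L)⁻¹ = L⁻¹ / 8 := by rw [mul_inv]; ring
  rw [hLi] at hη8
  have hLip0 : 0 < L⁻¹ := inv_pos.mpr hL
  have hv0 : LipschitzWith (Real.toNNReal η₀) (fun x => u x - u 0) := by
    apply LipschitzWith.of_dist_le_mul
    intro x y
    rw [dist_sub_right]
    exact hu'.dist_le_mul x y
  obtain ⟨H, hH⟩ := exists_homeo A (fun x => u x - u 0) (Real.toNNReal η₀) (L⁻¹ - η₀)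
    (by rw [Real.coe_toNNReal _ hη0.le]; linarith) hAlow hv0
  have hHs : ∀ x y, H x - H y = A (x - y) + (u x - u y) := by
    intro x y
    rw [hH, hH, map_sub]; abel
  have hΛ : 0 < L + 1 := by linarith
  obtain ⟨ρ, r1, r2, r3⟩ := radial_image N K (2 * L) (L + 1) η₀ (by linarith) (by linarith) hΛ
    hηK hlip hhom hlow H (by rw [hH]; simp)
    (by
      intro x y
      rw [hHs]
      have b1 := norm_add_le (A (x - y)) (u x - u y)
      have b2 := (Dg w0).le_of_opNorm_le hnA (x - y)
      have b2' : ‖A (x - y)‖ ≤ L * ‖x - y‖ := by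
        have e : A (x - y) = Dg w0 (x - y) := by rw [← hA]; rfl
        rw [e]; exact b2
      have b3 := hu2 x y
      nlinarith [norm_nonneg (x - y)])
    (by
      intro x y
      rw [hHs]
      have b1 := norm_sub_le (A (x - y) + (u x - u y)) (u x - u y)
      rw [add_sub_cancel_right] at b1
      have b2 := hAlow (x - y)
      have b3 := hu2 x y
      have b4 : L⁻¹ / 2 * ‖x - y‖ ≤ ‖A (x - y) + (u x - u y)‖ := by
        nlinarith [norm_nonneg (x - y)]
      calc ‖x - y‖ = 2 * L * (L⁻¹ / 2 * ‖x - y‖) := by field_simp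
        _ ≤ _ := mul_le_mul_of_nonneg_left b4 (by positivity))
    (by
      intro t x ht
      have e1 : H (t • x) - t • H x = (u (t • x) - u x) - (t - 1) • (u x - u 0) := by
        rw [hH, hH, map_smul]; module
      rw [e1]
      have b1 := norm_sub_le (u (t • x) - u x) ((t - 1) • (u x - u 0))
      have b2 := hu2 (t • x) x
      have b3 := hu2 x 0
      have e2 : t • x - x = (t - 1) • x := by module
      rw [e2, norm_smul, Real.norm_of_nonneg (by linarith : 0 ≤ t - 1)] at b2
      rw [norm_smul, Real.norm_of_nonneg (by linarith : 0 ≤ t - 1)] at b1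
      rw [sub_zero] at b3
      have b4 := mul_le_mul_of_nonneg_left b3 (by linarith : 0 ≤ t - 1)
      linarith)
  have himg : ∀ x ∈ Ω, g x = H x + u 0 := by
    intro x hx
    rw [hgu x hx, hH]; abel
  have himg' : g '' Ω = (fun y => y + u 0) '' (H '' Ω) := by
    rw [image_image]
    exact image_congr himg
  refine ⟨?_, ?_, (L + 1)⁻¹, LinearIsometryEquiv.refl ℝ _, -((L + 1)⁻¹ • u 0),
    fun θ => (L + 1)⁻¹ * ρ θ, inv_pos.mpr hΛ, ?_, ?_, ?_⟩
  · rw [himg']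
    exact (Homeomorph.addRight (u 0)).isOpenMap _ (H.isOpenMap _ ho)
  · exact hc.image _ (fun z hz => (hg z hz).continuousAt.continuousWithinAt)
  · have e1 : (fun x => (L + 1)⁻¹ • (LinearIsometryEquiv.refl ℝ
        (EuclideanSpace ℝ (Fin (d + 1)))) x + -((L + 1)⁻¹ • u 0)) '' (g '' Ω) =
        (Homeomorph.smulOfNeZero (L + 1)⁻¹ (inv_pos.mpr hΛ).ne') '' (H '' Ω) := by
      rw [himg', image_image, image_image, image_image]
      apply image_congr
      intro x hx
      simp
    rw [e1, ← Homeomorph.image_frontier, ← Homeomorph.image_frontier, hF, r1]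
    ext y
    constructor
    · rintro ⟨_, ⟨θ, hθ, rfl⟩, rfl⟩
      exact ⟨θ, hθ, by simp [smul_smul]⟩
    · rintro ⟨θ, hθ, rfl⟩
      exact ⟨_, ⟨θ, hθ, rfl⟩, by simp [smul_smul]⟩
  · intro θ hθ ψ hψ
    have := r2 θ hθ ψ hψ
    rw [← mul_sub, abs_mul, abs_of_pos (inv_pos.mpr hΛ)]
    calc _ ≤ (L + 1)⁻¹ * (2 * K * (2 * L) * (L + 1) ^ 2 * dist θ ψ) := by gcongr
      _ = _ := by field_simp
  · intro θ hθ
    obtain ⟨s1, s2⟩ := r3 θ hθ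
    constructor
    · calc 1 / (1 + 2 * K * (2 * L) * (L + 1)) ≤ 1 / ((L + 1) * (K * (2 * L))) := by
            apply one_div_le_one_div_of_le (by positivity)
            have : 0 ≤ K * L * (L + 1) := by positivity
            nlinarith
        _ = (L + 1)⁻¹ * (1 / (K * (2 * L))) := by field_simp
        _ ≤ _ := mul_le_mul_of_nonneg_left s1 (inv_pos.mpr hΛ).le
    · rw [inv_mul_le_iff₀ hΛ, mul_one]
      exact s2

/-- **Proposition `p:slow-vary-lip-graph`**: if `Ω` is an `L₀`-Lipschitz graph domain,
`g` is a `C¹`, `L`-bi-Lipschitz map on a neighborhood of `Ω` with everywhere invertible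
derivative satisfying `‖Dg(z) ∘ Dg(w)⁻¹ - I‖ ≤ δ` on `Ω` for some `δ < δ₀(L₀,L,d)`, then
`g(Ω)` is an `L₁(L₀,L,d)`-Lipschitz graph domain. -/
theorem image_lipschitz_graph_domain_of_slowly_varying_derivative (d : ℕ) (L₀ L : ℝ) :
    ∃ L₁ δ₀ : ℝ, 0 < L₁ ∧ 0 < δ₀ ∧
      ∀ (Ω : Set (EuclideanSpace ℝ (Fin (d + 1)))) (g : EuclideanSpace ℝ (Fin (d + 1)) → EuclideanSpace ℝ (Fin (d + 1))) (δ : ℝ) (U : Set (EuclideanSpace ℝ (Fin (d + 1)))),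
        IsLipschitzGraphDomain d L₀ Ω →
        0 < δ → δ < δ₀ →
        IsOpen U → Ω ⊆ U → ContDiffOn ℝ 1 g U →
        (∀ z ∈ Ω, ∀ z' ∈ Ω,
          L⁻¹ * dist z z' ≤ dist (g z) (g z') ∧ dist (g z) (g z') ≤ L * dist z z') →
        (∀ w ∈ Ω, ∃ B : EuclideanSpace ℝ (Fin (d + 1)) →L[ℝ] EuclideanSpace ℝ (Fin (d + 1)),
          (fderiv ℝ g w).comp B = ContinuousLinearMap.id ℝ (EuclideanSpace ℝ (Fin (d + 1))) ∧
          B.comp (fderiv ℝ g w) = ContinuousLinearMap.id ℝ (EuclideanSpace ℝ (Fin (d + 1))) ∧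
          ∀ z ∈ Ω, ‖(fderiv ℝ g z).comp B - ContinuousLinearMap.id ℝ (EuclideanSpace ℝ (Fin (d + 1)))‖ ≤ δ) →
        IsLipschitzGraphDomain d L₁ (g '' Ω) := by
  obtain ⟨θ₀, hθ₀⟩ : ∃ θ : EuclideanSpace ℝ (Fin (d + 1)), ‖θ‖ = 1 := exists_norm_eq _ zero_le_one
  by_cases hpos : 0 ≤ L₀ ∧ 0 < L
  swap
  · refine ⟨1, 1, one_pos, one_pos, ?_⟩
    intro Ω g δ U hΩ hδ hδ' hU hΩU hg hbi hB
    exfalso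
    apply hpos
    obtain ⟨ho, hc, c, R, b, rf, hc0, hF, h1, h2⟩ := hΩ
    constructor
    · have s1 : θ₀ ∈ Metric.sphere (0 : EuclideanSpace ℝ (Fin (d + 1))) 1 := by simpa using hθ₀
      have s2 : -θ₀ ∈ Metric.sphere (0 : EuclideanSpace ℝ (Fin (d + 1))) 1 := by simpa using hθ₀
      have h := (abs_nonneg _).trans (h1 _ s1 _ s2)
      have hd : dist θ₀ (-θ₀) = 2 := by
        rw [dist_eq_norm, sub_neg_eq_add, ← two_smul ℝ, norm_smul, hθ₀]
        norm_num
      rw [hd] at h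
      linarith
    · by_contra hL
      have hL := not_lt.mp hL
      obtain ⟨w, hw⟩ := hc.nonempty
      obtain ⟨B, hAB, hBA, -⟩ := hB w hw
      have hd : HasFDerivAt g (fderiv ℝ g w) w :=
        ((hg.differentiableOn one_ne_zero).differentiableAt
          (hU.mem_nhds (hΩU hw))).hasFDerivAt
      have hl : LipschitzOnWith 0 g Ω := by
        apply LipschitzOnWith.of_dist_le_mul
        intro x hx y hy
        refine ((hbi x hx y hy).2).trans ?_
        rw [NNReal.coe_zero, zero_mul]
        exact mul_nonpos_of_nonpos_of_nonneg hL dist_nonneg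
      have h0 := hd.le_of_lipschitzOn (ho.mem_nhds hw) hl
      have h0' : fderiv ℝ g w = 0 := by
        rw [← norm_le_zero_iff]; simpa using h0
      have := DFunLike.congr_fun hAB θ₀
      rw [h0'] at this
      simp at this
      rw [← this, norm_zero] at hθ₀
      exact zero_ne_one hθ₀
  obtain ⟨hM, hL⟩ := hpos
  obtain ⟨K, hK⟩ : ∃ K : ℝ, K = (1 + L₀) + 2 * L₀ * (1 + L₀) ^ 2 := ⟨_, rfl⟩
  obtain ⟨C, hC⟩ : ∃ C : ℝ, C = 24 * K + 12 := ⟨_, rfl⟩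
  obtain ⟨η₀, hη₀⟩ : ∃ η₀ : ℝ, η₀ = 1 / (8 * K * (L + 1)) := ⟨_, rfl⟩
  obtain ⟨δ₀, hδ₀⟩ : ∃ δ₀ : ℝ, δ₀ = η₀ /
    (lipschitzExtensionConstant (EuclideanSpace ℝ (Fin (d + 1))) * (L * C)) := ⟨_, rfl⟩
  have hK0 : 0 < K := by rw [hK]; positivity
  have hC0 : 0 < C := by rw [hC]; positivity
  have hκ : 0 < (lipschitzExtensionConstant (EuclideanSpace ℝ (Fin (d + 1))) : ℝ) :=
    NNReal.coe_pos.mpr (lipschitzExtensionConstant_pos _)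
  refine ⟨2 * K * (2 * L) * (L + 1), δ₀, by positivity, ?_, ?_⟩
  · rw [hδ₀, hη₀]; positivity
  intro Ω g δ U hΩ hδ hδ' hU hΩU hg hbi hB
  obtain ⟨ho, hc, c, R, b, rf, hc0, hF, h1, h2⟩ := hΩ
  obtain ⟨S, hS⟩ : ∃ S : EuclideanSpace ℝ (Fin (d + 1)) → EuclideanSpace ℝ (Fin (d + 1)),
    S = fun y => R.symm (c⁻¹ • (y - b)) := ⟨_, rfl⟩
  have hST : ∀ x, S (c • R x + b) = x := by
    intro x
    rw [hS]
    simp [smul_smul, hc0.ne']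
  have hTS : ∀ y, c • R (S y) + b = y := by
    intro y
    rw [hS]
    simp [smul_smul, hc0.ne']
  have hdS : ∀ y z, dist (S y) (S z) = c⁻¹ * dist y z := by
    intro y z
    rw [hS]
    simp only [R.symm.dist_map, dist_smul₀, dist_sub_right, Real.norm_of_nonneg (inv_pos.mpr hc0).le]
  have hSd : ∀ y, HasFDerivAt S (c⁻¹ • (R.symm.toContinuousLinearEquiv :
      EuclideanSpace ℝ (Fin (d + 1)) →L[ℝ] EuclideanSpace ℝ (Fin (d + 1)))) y := by
    intro y
    have a1 : HasFDerivAt (fun y : EuclideanSpace ℝ (Fin (d + 1)) => c⁻¹ • (y - b))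
        (c⁻¹ • ContinuousLinearMap.id ℝ (EuclideanSpace ℝ (Fin (d + 1)))) y :=
      ((hasFDerivAt_id y).sub_const b).const_smul c⁻¹
    have a2 := (R.symm.toContinuousLinearEquiv.hasFDerivAt (x := c⁻¹ • (y - b))).comp y a1
    rw [hS]
    have e : (c⁻¹ • (R.symm.toContinuousLinearEquiv :
        EuclideanSpace ℝ (Fin (d + 1)) →L[ℝ] EuclideanSpace ℝ (Fin (d + 1)))) =
        (R.symm.toContinuousLinearEquiv :
        EuclideanSpace ℝ (Fin (d + 1)) →L[ℝ] EuclideanSpace ℝ (Fin (d + 1))).comp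
        (c⁻¹ • ContinuousLinearMap.id ℝ (EuclideanSpace ℝ (Fin (d + 1)))) := by
      ext1 v
      simp
    rw [e]
    exact a2
  have hScont : Continuous S := continuous_iff_continuousAt.mpr fun y => (hSd y).continuousAt
  have himS : (fun x => c • R x + b) '' Ω = S ⁻¹' Ω := by
    ext y
    constructor
    · rintro ⟨x, hx, rfl⟩
      change S _ ∈ Ω
      rw [hST]; exact hx
    · intro h
      exact ⟨S y, h, hTS y⟩
  have hcT : IsConnected ((fun x => c • R x + b) '' Ω) := by
    apply hc.image
    have := R.continuous
    fun_prop
  rw [himS] at hF hcT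
  have main := normalized d L₀ L K C η₀ δ₀ hM hL hK hC hη₀ hδ₀ (S ⁻¹' Ω) (ho.preimage hScont) hcT
    rf hF h1 h2 (fun y => c • g (S y)) δ hδ hδ'
    (fun y => (fderiv ℝ g (S y)).comp (R.symm.toContinuousLinearEquiv :
      EuclideanSpace ℝ (Fin (d + 1)) →L[ℝ] EuclideanSpace ℝ (Fin (d + 1))))
    (by
      intro z hz
      have hd : HasFDerivAt g (fderiv ℝ g (S z)) (S z) :=
        ((hg.differentiableOn one_ne_zero).differentiableAt
          (hU.mem_nhds (hΩU hz))).hasFDerivAt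
      have := (hd.comp z (hSd z)).const_smul c
      have e : (fderiv ℝ g (S z)).comp (R.symm.toContinuousLinearEquiv :
          EuclideanSpace ℝ (Fin (d + 1)) →L[ℝ] EuclideanSpace ℝ (Fin (d + 1))) =
          c • (fderiv ℝ g (S z)).comp (c⁻¹ • (R.symm.toContinuousLinearEquiv :
          EuclideanSpace ℝ (Fin (d + 1)) →L[ℝ] EuclideanSpace ℝ (Fin (d + 1)))) := by
        ext1 v
        simp [smul_smul, hc0.ne']
      rw [e]
      exact this)
    (by
      intro z hz z' hz'
      obtain ⟨p, q⟩ := hbi _ hz _ hz'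
      simp only [dist_smul₀, Real.norm_of_nonneg hc0.le]
      rw [hdS] at p q
      constructor
      · calc L⁻¹ * dist z z' = c * (L⁻¹ * (c⁻¹ * dist z z')) := by field_simp
          _ ≤ _ := by gcongr
      · calc _ ≤ c * (L * (c⁻¹ * dist z z')) := by gcongr
          _ = _ := by field_simp)
    (by
      intro w hw
      obtain ⟨B, p, q, r⟩ := hB _ hw
      have key : ∀ z, ((fderiv ℝ g (S z)).comp (R.symm.toContinuousLinearEquiv :
          EuclideanSpace ℝ (Fin (d + 1)) →L[ℝ] EuclideanSpace ℝ (Fin (d + 1)))).comp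
          ((R.toContinuousLinearEquiv :
          EuclideanSpace ℝ (Fin (d + 1)) →L[ℝ] EuclideanSpace ℝ (Fin (d + 1))).comp B) =
          (fderiv ℝ g (S z)).comp B := by
        intro z
        ext1 v
        simp
      refine ⟨(R.toContinuousLinearEquiv :
          EuclideanSpace ℝ (Fin (d + 1)) →L[ℝ] EuclideanSpace ℝ (Fin (d + 1))).comp B, ?_, ?_, ?_⟩
      · rw [key, p]
      · ext1 v
        have := DFunLike.congr_fun q (R.symm v)
        simp at this
        simp [this]
      · intro z hz
        rw [key]
        exact r _ hz)
  obtain ⟨mo, mc, c', R', b', rf', hc', hF', h1', h2'⟩ := main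
  have hconv : (fun y => c • g (S y)) '' (S ⁻¹' Ω) = (fun x => c • x) '' (g '' Ω) := by
    rw [← himS, image_image, image_image]
    simp only [hST]
  have hinv : g '' Ω = (fun x => c⁻¹ • x) '' ((fun y => c • g (S y)) '' (S ⁻¹' Ω)) := by
    rw [hconv, image_image]
    simp [smul_smul, hc0.ne']
  refine ⟨?_, ?_, c' * c, R', b', rf', by positivity, ?_, h1', h2'⟩
  · rw [hinv]
    exact (Homeomorph.smulOfNeZero c⁻¹ (inv_pos.mpr hc0).ne').isOpenMap _ mo
  · rw [hinv]
    exact mc.image _ (by fun_prop)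
  · have h3 : (fun x => (c' * c) • R' x + b') = (fun x => c' • R' x + b') ∘ (fun x => c • x) := by
      funext x
      simp only [Function.comp]
      rw [R'.map_smul, smul_smul]
    rw [← hF', hconv, h3, image_comp]

end
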